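/- arXiv:2507.15160 — 4 statements merged into one kernel-verified Lean document; each statement's English description precedes it below -/
import Mathlib

section
/- Let λ, x, y, z, w, t be complex numbers with |λ| < 1, |y| < |x|, |w| < |z|, and |t·x·z| < 1. Then ∑_{n=0}^∞ (−1)^n · x^{n+1}/(x − λ^n y) · z^{n+1}/(z − λ^n w) · t^n = ∑_{k=0}^∞ ∑_{n=0}^∞ (w/z)^k (y/x)^n · 1/(1 + λ^{k+n} t x z), where the right-hand side is an absolutely convergent double series. -/
/-!
Put `a = w / z`, `b = y / x`, `s = t x z`. Since `xⁿ⁺¹ / (x - λⁿ y) = xⁿ / (1 - λⁿ b)`, expanding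
both geometric series on the left and the power series `f(u) = ∑ cₘ uᵐ`, here with `cₘ = (-1)ᵐ`,
on the right turns the two sides into the iterated sums, in the two possible orders, of the triple
series `∑ aᵏ bⁿ cₘ (λᵏ⁺ⁿ s)ᵐ`. As `‖λ‖ ≤ 1`, it is dominated by `∑ ‖a‖ᵏ ‖b‖ⁿ ‖cₘ sᵐ‖`, so Fubini
applies.
-/

theorem summable_norm_of_hasSum_fiberwise {β γ E : Type*} [SeminormedAddCommGroup E]
    {F : β × γ → E} {g : β → E} (hF : Summable fun r => ‖F r‖)
    (hg : ∀ p, HasSum (fun m => F (p, m)) (g p)) : Summable fun p => ‖g p‖ :=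
  hF.prod.of_nonneg_of_le (fun _ => norm_nonneg _) fun p =>
    (hg p).norm_le_of_bounded (hF.prod_factor p).hasSum fun _ => le_rfl

theorem hasSum_tsum_of_hasSum_fiberwise {β γ E : Type*} [AddCommMonoid E] [TopologicalSpace E]
    [ContinuousAdd E] [T3Space E] {F : β × γ → E} {g : β → E} {h : γ → E} (hF : Summable F)
    (hg : ∀ p, HasSum (fun m => F (p, m)) (g p)) (hh : ∀ m, HasSum (fun p => F (p, m)) (h m)) :
    HasSum h (∑' p, g p) := by
  rw [(hF.hasSum.prod_fiberwise hg).tsum_eq]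
  exact ((Equiv.prodComm γ β).hasSum_iff.mpr hF.hasSum).prod_fiberwise hh

theorem norm_pow_mul_le_norm {R : Type*} [SeminormedRing R] [NormOneClass R] {q : R}
    (hq : ‖q‖ ≤ 1) (n : ℕ) (u : R) : ‖q ^ n * u‖ ≤ ‖u‖ :=
  (norm_mul_le _ _).trans <| mul_le_of_le_one_left (norm_nonneg u) <|
    (norm_pow_le q n).trans (pow_le_one₀ (norm_nonneg q) hq)

theorem hasSum_geometric_mul_geometric {K : Type*} [NormedDivisionRing K] {a b : K}
    (ha : ‖a‖ < 1) (hb : ‖b‖ < 1) :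
    HasSum (fun p : ℕ × ℕ => a ^ p.1 * b ^ p.2) ((1 - a)⁻¹ * (1 - b)⁻¹) := by
  have hsum : Summable fun p : ℕ × ℕ => a ^ p.1 * b ^ p.2 :=
    summable_mul_of_summable_norm'
      (summable_norm_geometric_of_norm_lt_one ha) (summable_geometric_of_norm_lt_one ha)
      (summable_norm_geometric_of_norm_lt_one hb) (summable_geometric_of_norm_lt_one hb)
  exact (hasSum_geometric_of_norm_lt_one ha).mul (hasSum_geometric_of_norm_lt_one hb) hsum

theorem hasSum_neg_one_pow_mul_pow {K : Type*} [NormedDivisionRing K] {u : K} (hu : ‖u‖ < 1) :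
    HasSum (fun n : ℕ => (-1) ^ n * u ^ n) (1 / (1 + u)) := by
  simpa only [neg_pow u, sub_neg_eq_add, one_div] using
    hasSum_geometric_of_norm_lt_one ((norm_neg u).trans_lt hu)

theorem pow_succ_div_sub_mul {K : Type*} [Field K] {x : K} (hx : x ≠ 0) (n : ℕ) (q y : K) :
    x ^ (n + 1) / (x - q * y) = x ^ n * (1 - q * (y / x))⁻¹ := by
  have factor : x - q * y = x * (1 - q * (y / x)) := by field_simp
  rw [factor, pow_succ', mul_div_mul_left _ _ hx, div_eq_mul_inv]

theorem norm_div_lt_one {K : Type*} [NormedDivisionRing K] {x y : K} (h : ‖y‖ < ‖x‖) :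
    ‖y / x‖ < 1 := by
  rw [norm_div]
  exact (div_lt_one ((norm_nonneg y).trans_lt h)).mpr h

/-- The term `aᵏ bⁿ cₘ (qᵏ⁺ⁿ s)ᵐ` of the triple series behind the Lambert–Mehler identity. The
indices `((k, n), m)` are grouped so that the two groups correspond to the two sides. -/
def lambertMehlerTerm {R : Type*} [Semiring R] (q a b s : R) (c : ℕ → R) (r : (ℕ × ℕ) × ℕ) : R :=
  a ^ r.1.1 * b ^ r.1.2 * (c r.2 * (q ^ (r.1.1 + r.1.2) * s) ^ r.2)

namespace lambertMehlerTerm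

theorem eq_mul_geometric {R : Type*} [CommSemiring R] (q a b s : R) (c : ℕ → R)
    (p : ℕ × ℕ) (m : ℕ) :
    lambertMehlerTerm q a b s c (p, m) =
      c m * s ^ m * ((q ^ m * a) ^ p.1 * (q ^ m * b) ^ p.2) := by
  simp only [lambertMehlerTerm]
  ring

variable {𝕜 : Type*} [NormedField 𝕜] {q a b s : 𝕜} {c : ℕ → 𝕜} {f : 𝕜 → 𝕜}

theorem norm_le (hq : ‖q‖ ≤ 1) (r : (ℕ × ℕ) × ℕ) :
    ‖lambertMehlerTerm q a b s c r‖ ≤ ‖a‖ ^ r.1.1 * ‖b‖ ^ r.1.2 * ‖c r.2 * s ^ r.2‖ := by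
  simp only [lambertMehlerTerm, norm_mul (_ * _), norm_mul (c _), norm_mul (a ^ _), norm_pow]
  gcongr
  exact norm_pow_mul_le_norm hq _ s

theorem summable_norm (hq : ‖q‖ ≤ 1) (ha : ‖a‖ < 1) (hb : ‖b‖ < 1)
    (hc : Summable fun m => ‖c m * s ^ m‖) :
    Summable fun r => ‖lambertMehlerTerm q a b s c r‖ := by
  have geometric : Summable fun p : ℕ × ℕ => ‖a‖ ^ p.1 * ‖b‖ ^ p.2 :=
    (hasSum_geometric_mul_geometric ((norm_norm a).trans_lt ha)
      ((norm_norm b).trans_lt hb)).summable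
  have majorant :
      Summable fun r : (ℕ × ℕ) × ℕ => ‖a‖ ^ r.1.1 * ‖b‖ ^ r.1.2 * ‖c r.2 * s ^ r.2‖ :=
    geometric.mul_of_nonneg hc (fun _ => by positivity) fun _ => norm_nonneg _
  exact majorant.of_nonneg_of_le (fun _ => norm_nonneg _) (norm_le hq)

theorem hasSum_powerSeries (hq : ‖q‖ ≤ 1)
    (hf : ∀ u, ‖u‖ ≤ ‖s‖ → HasSum (fun m => c m * u ^ m) (f u)) (p : ℕ × ℕ) :
    HasSum (fun m => lambertMehlerTerm q a b s c (p, m))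
      (a ^ p.1 * b ^ p.2 * f (q ^ (p.1 + p.2) * s)) :=
  (hf _ (norm_pow_mul_le_norm hq _ s)).mul_left _

theorem hasSum_geometric (hq : ‖q‖ ≤ 1) (ha : ‖a‖ < 1) (hb : ‖b‖ < 1) (m : ℕ) :
    HasSum (fun p => lambertMehlerTerm q a b s c (p, m))
      (c m * s ^ m * ((1 - q ^ m * a)⁻¹ * (1 - q ^ m * b)⁻¹)) := by
  simp only [eq_mul_geometric]
  exact (hasSum_geometric_mul_geometric ((norm_pow_mul_le_norm hq m a).trans_lt ha)
    ((norm_pow_mul_le_norm hq m b).trans_lt hb)).mul_left _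

end lambertMehlerTerm

theorem generalized_lambert_mehler_alternating_general {𝕜 : Type*} [NormedField 𝕜]
    [CompleteSpace 𝕜] {l x y z w t : 𝕜} {c : ℕ → 𝕜} {f : 𝕜 → 𝕜}
    (hl : ‖l‖ ≤ 1) (hyx : ‖y‖ < ‖x‖) (hwz : ‖w‖ < ‖z‖)
    (hc : Summable fun n => ‖c n * (t * x * z) ^ n‖)
    (hf : ∀ u, ‖u‖ ≤ ‖t * x * z‖ → HasSum (fun n => c n * u ^ n) (f u)) :
    Summable (fun p : ℕ × ℕ =>
      ‖(w / z) ^ p.1 * (y / x) ^ p.2 * f (l ^ (p.1 + p.2) * t * x * z)‖) ∧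
    HasSum (fun n => c n * (x ^ (n + 1) / (x - l ^ n * y)) *
        (z ^ (n + 1) / (z - l ^ n * w)) * t ^ n)
      (∑' k : ℕ, ∑' n : ℕ, (w / z) ^ k * (y / x) ^ n * f (l ^ (k + n) * t * x * z)) := by
  have hx : x ≠ 0 := norm_pos_iff.mp ((norm_nonneg y).trans_lt hyx)
  have hz : z ≠ 0 := norm_pos_iff.mp ((norm_nonneg w).trans_lt hwz)
  have ha : ‖w / z‖ < 1 := norm_div_lt_one hwz
  have hb : ‖y / x‖ < 1 := norm_div_lt_one hyx
  have argument (k : ℕ) : l ^ k * t * x * z = l ^ k * (t * x * z) := by ring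
  have lhs_term (n : ℕ) :
      c n * (x ^ (n + 1) / (x - l ^ n * y)) * (z ^ (n + 1) / (z - l ^ n * w)) * t ^ n =
        c n * (t * x * z) ^ n * ((1 - l ^ n * (w / z))⁻¹ * (1 - l ^ n * (y / x))⁻¹) := by
    rw [pow_succ_div_sub_mul hx, pow_succ_div_sub_mul hz]
    ring
  simp only [argument, lhs_term]
  have triple := lambertMehlerTerm.summable_norm hl ha hb hc
  have rows := lambertMehlerTerm.hasSum_powerSeries (a := w / z) (b := y / x) hl hf
  have double := summable_norm_of_hasSum_fiberwise triple rows
  refine ⟨double, ?_⟩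
  rw [← double.of_norm.tsum_prod]
  exact hasSum_tsum_of_hasSum_fiberwise triple.of_norm rows
    (lambertMehlerTerm.hasSum_geometric hl ha hb)

/-- Mehler-type generalized Lambert series for `aₙ = (−1)ⁿ`,
with generating function `f(u) = 1/(1+u)`. -/
theorem generalized_lambert_mehler_alternating (l x y z w t : ℂ)
    (hl : ‖l‖ < 1) (hyx : ‖y‖ < ‖x‖) (hwz : ‖w‖ < ‖z‖) (htxz : ‖t * x * z‖ < 1) :
    Summable (fun p : ℕ × ℕ =>
      ‖(w / z) ^ p.1 * (y / x) ^ p.2 * (1 / (1 + l ^ (p.1 + p.2) * t * x * z))‖) ∧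
    ∑' n : ℕ, (-1 : ℂ) ^ n * (x ^ (n + 1) / (x - l ^ n * y)) *
        (z ^ (n + 1) / (z - l ^ n * w)) * t ^ n
      = ∑' k : ℕ, ∑' n : ℕ, (w / z) ^ k * (y / x) ^ n *
          (1 / (1 + l ^ (k + n) * t * x * z)) := by
  have hc : Summable fun n : ℕ => ‖(-1 : ℂ) ^ n * (t * x * z) ^ n‖ :=
    (hasSum_neg_one_pow_mul_pow htxz).summable.norm
  have h := generalized_lambert_mehler_alternating_general hl.le hyx hwz hc
    fun _ hu => hasSum_neg_one_pow_mul_pow (hu.trans_lt htxz)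
  exact ⟨h.1, h.2.tsum_eq⟩
end

section
/- Let m ≥ 1 and let λ₁,…,λ_m, x₁,…,x_m, y₁,…,y_m be complex numbers with |λ_i| < 1 and |y_i| < |x_i| for each i, and |x₁⋯x_m| < 1. Then ∑_{n=0}^∞ (∏_{i=1}^m x_i^{n+1}/(x_i − λ_i^n y_i)) = ∑_{(k₁,…,k_m) ∈ ℕ^m} (∏_{i=1}^m (y_i/x_i)^{k_i}) · 1/(1 − λ₁^{k₁}⋯λ_m^{k_m} x₁⋯x_m), where the right-hand side is an absolutely convergent sum over ℕ^m. -/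
/-!
Put `Q k = ∏ i, l i ^ k i` and `P = ∏ i, x i`. Expanding each factor
`x i / (x i - l i ^ n * y i) = ∑ j, (y i / x i * l i ^ n) ^ j` and multiplying out, the `n`-th term
of the Lambert series is `P ^ n * ∑ k, (∏ i, (y i / x i) ^ k i) * Q k ^ n`. As `‖Q k‖ ≤ 1`, the
resulting double series is dominated by a product of two absolutely convergent series, so it may be
summed over `n` first; the inner sums are values of the generating function at `Q k * P`.
-/

open Filter

section SeriesOverPi

theorem tendsto_eval_atTop {ι : Type*} {α : ι → Type*} [∀ i, Preorder (α i)]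
    [∀ i, Nonempty (α i)] (i : ι) : Tendsto (Function.eval i : (∀ j, α j) → α i) atTop atTop := by
  classical
  exact tendsto_atTop_atTop_of_monotone (Function.monotone_eval i) fun b =>
    ⟨Function.update (fun _ => Classical.arbitrary _) i b, by simp⟩

variable {ι : Type*} [Fintype ι] {κ : ι → Type*}

theorem tendsto_piFinset_atTop [DecidableEq ι] :
    Tendsto (Fintype.piFinset : (∀ i, Finset (κ i)) → Finset (∀ i, κ i)) atTop atTop := by
  classical
  refine tendsto_atTop_finset_of_monotone
    (fun s t hst => Fintype.piFinset_subset s t hst) fun k => ⟨fun i => {k i}, ?_⟩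
  simp

theorem summable_pi_prod_of_nonneg {f : ∀ i, κ i → ℝ} (hf₀ : ∀ i j, 0 ≤ f i j)
    (hf : ∀ i, Summable (f i)) : Summable fun k : ∀ i, κ i => ∏ i, f i (k i) := by
  classical
  have hnonneg (k : ∀ i, κ i) : 0 ≤ ∏ i, f i (k i) := Finset.prod_nonneg fun i _ => hf₀ i (k i)
  refine summable_of_sum_le (c := ∏ i, ∑' j, f i j) hnonneg fun s => ?_
  let box : ∀ i, Finset (κ i) := fun i => s.image (· i)
  have hbox : s ⊆ Fintype.piFinset box := fun k hk =>
    Fintype.mem_piFinset.2 fun _ => Finset.mem_image_of_mem _ hk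
  calc ∑ k ∈ s, ∏ i, f i (k i)
      ≤ ∑ k ∈ Fintype.piFinset box, ∏ i, f i (k i) :=
        Finset.sum_le_sum_of_subset_of_nonneg hbox fun k _ _ => hnonneg k
    _ = ∏ i, ∑ j ∈ box i, f i j := (Finset.prod_univ_sum box f).symm
    _ ≤ ∏ i, ∑' j, f i j :=
        Finset.prod_le_prod (fun i _ => Finset.sum_nonneg fun j _ => hf₀ i j) fun i _ =>
          (hf i).sum_le_tsum _ fun j _ => hf₀ i j

theorem hasSum_pi_prod {R : Type*} [CommSemiring R] [TopologicalSpace R] [ContinuousMul R]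
    [T2Space R] {f : ∀ i, κ i → R} {a : ι → R} (hf : ∀ i, HasSum (f i) (a i))
    (hprod : Summable fun k : ∀ i, κ i => ∏ i, f i (k i)) :
    HasSum (fun k : ∀ i, κ i => ∏ i, f i (k i)) (∏ i, a i) := by
  classical
  have hfactor (i : ι) : Tendsto (fun t : Finset (κ i) => ∑ j ∈ t, f i j) atTop (nhds (a i)) := hf i
  have hpi : Tendsto (fun t : Finset (∀ i, κ i) => ∑ k ∈ t, ∏ i, f i (k i)) atTop
      (nhds (∑' k : ∀ i, κ i, ∏ i, f i (k i))) := hprod.hasSum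
  have hboxes : Tendsto (fun s : ∀ i, Finset (κ i) => ∑ k ∈ Fintype.piFinset s, ∏ i, f i (k i))
      atTop (nhds (∏ i, a i)) := by
    simp only [← Finset.prod_univ_sum]
    exact tendsto_finsetProd _ fun i _ => (hfactor i).comp (tendsto_eval_atTop i)
  have htsum : ∑' k : ∀ i, κ i, ∏ i, f i (k i) = ∏ i, a i :=
    tendsto_nhds_unique (hpi.comp tendsto_piFinset_atTop) hboxes
  exact htsum ▸ hprod.hasSum

end SeriesOverPi

section PiGeometric

variable {ι 𝕜 : Type*} [Fintype ι] [NormedField 𝕜] {r : ι → 𝕜}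

theorem summable_norm_pi_geometric (hr : ∀ i, ‖r i‖ < 1) :
    Summable fun k : ι → ℕ => ‖∏ i, r i ^ k i‖ := by
  simp only [norm_prod, norm_pow]
  exact summable_pi_prod_of_nonneg (fun i j => pow_nonneg (norm_nonneg (r i)) j)
    fun i => summable_geometric_of_lt_one (norm_nonneg _) (hr i)

theorem hasSum_pi_geometric [CompleteSpace 𝕜] (hr : ∀ i, ‖r i‖ < 1) :
    HasSum (fun k : ι → ℕ => ∏ i, r i ^ k i) (∏ i, (1 - r i)⁻¹) :=
  hasSum_pi_prod (fun i => hasSum_geometric_of_norm_lt_one (hr i))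
    (summable_norm_pi_geometric hr).of_norm

theorem norm_prod_pow_le_one (hr : ∀ i, ‖r i‖ ≤ 1) (k : ι → ℕ) : ‖∏ i, r i ^ k i‖ ≤ 1 := by
  simp only [norm_prod, norm_pow]
  exact Finset.prod_le_one (fun i _ => pow_nonneg (norm_nonneg _) _)
    fun i _ => pow_le_one₀ (norm_nonneg _) (hr i)

end PiGeometric

section PowerSeriesFamily

variable {κ R : Type*} [NormedCommRing R] [NormOneClass R] {c q : κ → R} {b : ℕ → R}

theorem summable_norm_mul_mul_pow (hc : Summable fun k => ‖c k‖) (hq : ∀ k, ‖q k‖ ≤ 1)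
    (hb : Summable fun n => ‖b n‖) :
    Summable fun p : κ × ℕ => ‖c p.1 * (b p.2 * q p.1 ^ p.2)‖ := by
  refine (hc.mul_of_nonneg hb (fun _ => norm_nonneg _) fun _ => norm_nonneg _).of_nonneg_of_le
    (fun _ => norm_nonneg _) fun ⟨k, n⟩ => ?_
  have hpow : ‖q k ^ n‖ ≤ 1 := (norm_pow_le _ _).trans (pow_le_one₀ (norm_nonneg _) (hq k))
  calc ‖c k * (b n * q k ^ n)‖ ≤ ‖c k‖ * (‖b n‖ * ‖q k ^ n‖) := by
        grw [norm_mul_le, norm_mul_le]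
    _ ≤ ‖c k‖ * ‖b n‖ := by grw [mul_le_of_le_one_right (norm_nonneg (b n)) hpow]

variable {g : κ → R}

theorem summable_norm_mul_of_hasSum_mul_pow (hc : Summable fun k => ‖c k‖) (hq : ∀ k, ‖q k‖ ≤ 1)
    (hb : Summable fun n => ‖b n‖) (hg : ∀ k, HasSum (fun n => b n * q k ^ n) (g k)) :
    Summable fun k => ‖c k * g k‖ := by
  have hdouble := summable_norm_mul_mul_pow hc hq hb
  refine hdouble.prod.of_nonneg_of_le (fun _ => norm_nonneg _) fun k => ?_
  rw [← ((hg k).mul_left (c k)).tsum_eq]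
  exact norm_tsum_le_tsum_norm (hdouble.prod_factor k)

theorem tsum_mul_tsum_mul_pow [CompleteSpace R] (hc : Summable fun k => ‖c k‖)
    (hq : ∀ k, ‖q k‖ ≤ 1) (hb : Summable fun n => ‖b n‖)
    (hg : ∀ k, HasSum (fun n => b n * q k ^ n) (g k)) :
    ∑' n, b n * ∑' k, c k * q k ^ n = ∑' k, c k * g k := by
  have hdouble : Summable fun p : κ × ℕ => c p.1 * (b p.2 * q p.1 ^ p.2) :=
    (summable_norm_mul_mul_pow hc hq hb).of_norm
  have hcol (n : ℕ) : Summable fun k => c k * q k ^ n := by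
    refine hc.of_norm_bounded fun k => ?_
    grw [norm_mul_le, norm_pow_le, pow_le_one₀ (norm_nonneg _) (hq k), mul_one]
  calc ∑' n, b n * ∑' k, c k * q k ^ n
      = ∑' n, ∑' k, c k * (b n * q k ^ n) := by
        simp only [← (hcol _).tsum_mul_left, mul_left_comm]
    _ = ∑' k, ∑' n, c k * (b n * q k ^ n) :=
        hdouble.tsum_comm (f := fun k n => c k * (b n * q k ^ n))
    _ = ∑' k, c k * g k := tsum_congr fun k => ((hg k).mul_left (c k)).tsum_eq

end PowerSeriesFamily

section Lambert

variable {𝕜 : Type*} [NormedField 𝕜]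

theorem norm_div_lt_one_of_norm_lt {u v : 𝕜} (h : ‖u‖ < ‖v‖) : ‖u / v‖ < 1 := by
  rw [norm_div]
  exact (div_lt_one ((norm_nonneg u).trans_lt h)).2 h

theorem pow_succ_div_sub_mul_s9 {u v w : 𝕜} (hu : u ≠ 0) (n : ℕ) :
    u ^ (n + 1) / (u - w * v) = u ^ n * (1 - v / u * w)⁻¹ := by
  have : 1 - v / u * w = (u - w * v) / u := by field_simp
  rw [this, inv_div, pow_succ, mul_div_assoc]

variable [CompleteSpace 𝕜] {ι : Type*} [Fintype ι] {l x y : ι → 𝕜}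

theorem prod_lambert_eq_mul_tsum (hl : ∀ i, ‖l i‖ ≤ 1) (hyx : ∀ i, ‖y i‖ < ‖x i‖) (n : ℕ) :
    ∏ i, x i ^ (n + 1) / (x i - l i ^ n * y i) =
      (∏ i, x i) ^ n * ∑' k : ι → ℕ, (∏ i, (y i / x i) ^ k i) * (∏ i, l i ^ k i) ^ n := by
  have hx₀ (i) : x i ≠ 0 := norm_pos_iff.1 ((norm_nonneg _).trans_lt (hyx i))
  have hratio (i) : ‖y i / x i * l i ^ n‖ < 1 := by
    rw [norm_mul, norm_pow]
    exact mul_lt_one_of_nonneg_of_lt_one_left (norm_nonneg _) (norm_div_lt_one_of_norm_lt (hyx i))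
      (pow_le_one₀ (norm_nonneg _) (hl i))
  calc ∏ i, x i ^ (n + 1) / (x i - l i ^ n * y i)
      = (∏ i, x i) ^ n * ∏ i, (1 - y i / x i * l i ^ n)⁻¹ := by
        simp only [pow_succ_div_sub_mul_s9 (hx₀ _), Finset.prod_mul_distrib, Finset.prod_pow]
    _ = (∏ i, x i) ^ n * ∑' k : ι → ℕ, ∏ i, (y i / x i * l i ^ n) ^ k i := by
        rw [(hasSum_pi_geometric hratio).tsum_eq]
    _ = (∏ i, x i) ^ n * ∑' k : ι → ℕ, (∏ i, (y i / x i) ^ k i) * (∏ i, l i ^ k i) ^ n := by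
        simp only [mul_pow, Finset.prod_mul_distrib, ← Finset.prod_pow, pow_right_comm]

/-- The factor `z ^ n` of the generalized Lambert series is absorbed in the coefficient `a n`. -/
theorem multivariate_generalized_lambert_geometric_general {a : ℕ → 𝕜} {f : 𝕜 → 𝕜}
    (hl : ∀ i, ‖l i‖ ≤ 1) (hyx : ∀ i, ‖y i‖ < ‖x i‖)
    (ha : Summable fun n => ‖a n * (∏ i, x i) ^ n‖)
    (hf : ∀ u, ‖u‖ ≤ ‖∏ i, x i‖ → HasSum (fun n => a n * u ^ n) (f u)) :
    (Summable fun k : ι → ℕ =>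
      ‖(∏ i, (y i / x i) ^ k i) * f ((∏ i, l i ^ k i) * ∏ i, x i)‖) ∧
    ∑' n, a n * ∏ i, x i ^ (n + 1) / (x i - l i ^ n * y i) =
      ∑' k : ι → ℕ, (∏ i, (y i / x i) ^ k i) * f ((∏ i, l i ^ k i) * ∏ i, x i) := by
  have hc := summable_norm_pi_geometric fun i => norm_div_lt_one_of_norm_lt (hyx i)
  have hq := norm_prod_pow_le_one hl
  have hg (k : ι → ℕ) : HasSum (fun n => a n * (∏ i, x i) ^ n * (∏ i, l i ^ k i) ^ n)
      (f ((∏ i, l i ^ k i) * ∏ i, x i)) := by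
    have hle : ‖(∏ i, l i ^ k i) * ∏ i, x i‖ ≤ ‖∏ i, x i‖ := by
      rw [norm_mul]
      exact mul_le_of_le_one_left (norm_nonneg _) (hq k)
    simpa only [mul_pow, mul_comm, mul_left_comm, mul_assoc] using hf _ hle
  refine ⟨summable_norm_mul_of_hasSum_mul_pow hc hq ha hg, ?_⟩
  simp only [prod_lambert_eq_mul_tsum hl hyx, ← mul_assoc]
  exact tsum_mul_tsum_mul_pow hc hq ha hg

end Lambert

/-- Multivariate generalized Lambert series for `aₙ = 1` and `z = 1`. -/
theorem multivariate_generalized_lambert_geometric (m : ℕ) (hm : 1 ≤ m)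
    (l x y : Fin m → ℂ)
    (hl : ∀ i, ‖l i‖ < 1) (hyx : ∀ i, ‖y i‖ < ‖x i‖) (hx : ‖∏ i, x i‖ < 1) :
    Summable (fun k : Fin m → ℕ =>
      ‖(∏ i, (y i / x i) ^ k i) *
        (1 / (1 - (∏ i, l i ^ k i) * ∏ i, x i))‖) ∧
    ∑' n : ℕ, ∏ i, x i ^ (n + 1) / (x i - l i ^ n * y i)
      = ∑' k : Fin m → ℕ, (∏ i, (y i / x i) ^ k i) *
          (1 / (1 - (∏ i, l i ^ k i) * ∏ i, x i)) := by
  have hgeom (u : ℂ) (hu : ‖u‖ ≤ ‖∏ i, x i‖) : HasSum (fun n => 1 * u ^ n) (1 / (1 - u)) := by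
    simpa only [one_mul, one_div] using hasSum_geometric_of_norm_lt_one (hu.trans_lt hx)
  simpa only [one_mul] using multivariate_generalized_lambert_geometric_general
    (fun i => (hl i).le) hyx (hgeom _ le_rfl).summable.norm hgeom
end

section
/- Let λ, x, y, t, s be complex numbers with 0 < |λ| < 1, |y| < |x|, 0 < |t·x| < 1, and 0 < |s·x| < 1. Then ∑_{n=0}^∞ ∑_{m=0}^∞ (1/((n+1)(m+1))) · x^{n+m+1}/(x − λ^{n+m} y) · t^n s^m = ∑_{k=0}^∞ (y/(λ² x))^k · log(1 − λ^k t x) · log(1 − λ^k s x)/(t s x²), where log denotes the principal branch of the complex logarithm and the left-hand side is an absolutely convergent double series. -/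
/-!
Since `‖λ‖ ≤ 1` and `‖y‖ < ‖x‖`, each factor `x / (x - λ ^ (n + m) * y)` is a geometric series with
ratio `λ ^ (n + m) * (y / x)`, uniformly bounded by `‖y / x‖ < 1`. Interchanging this series with
the sum over `(n, m)` turns the coefficient of `(y / x) ^ k` into `∑ aₙ bₘ (λᵏtx)ⁿ (λᵏsx)ᵐ`, which
factors as `f (λᵏtx) * g (λᵏsx)` with `f`, `g` the generating functions of `a`, `b`; for the
coefficients `1 / (n + 1)` both equal `-log (1 - u) / u`.
-/

section GeometricExpansion

variable {ι 𝕜 : Type*} [NormedField 𝕜] {c z : ι → 𝕜} {ρ : ℝ}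

lemma summable_norm_div_one_sub (hc : Summable fun i => ‖c i‖) (hz : ∀ i, ‖z i‖ ≤ ρ)
    (hρ : ρ < 1) : Summable fun i => ‖c i / (1 - z i)‖ := by
  refine (hc.div_const (1 - ρ)).of_nonneg_of_le (fun _ => norm_nonneg _) fun i => ?_
  have hlower : 1 - ρ ≤ ‖1 - z i‖ :=
    calc 1 - ρ ≤ ‖(1 : 𝕜)‖ - ‖z i‖ := by rw [norm_one]; linarith [hz i]
      _ ≤ ‖1 - z i‖ := norm_sub_norm_le _ _
  rw [norm_div]
  exact div_le_div_of_nonneg_left (norm_nonneg _) (sub_pos.2 hρ) hlower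

variable [CompleteSpace 𝕜]

lemma summable_mul_pow_of_norm_le (hc : Summable fun i => ‖c i‖) (hz : ∀ i, ‖z i‖ ≤ ρ)
    (hρ0 : 0 ≤ ρ) (hρ : ρ < 1) : Summable fun p : ι × ℕ => c p.1 * z p.1 ^ p.2 := by
  have hmajorant : Summable fun p : ι × ℕ => ‖c p.1‖ * ρ ^ p.2 :=
    hc.mul_of_nonneg (summable_geometric_of_lt_one hρ0 hρ) (fun _ => norm_nonneg _)
      fun k => pow_nonneg hρ0 k
  refine hmajorant.of_norm_bounded fun p => ?_
  rw [norm_mul, norm_pow]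
  gcongr
  exact hz p.1

lemma tsum_div_one_sub_eq_tsum_tsum_mul_pow (hc : Summable fun i => ‖c i‖)
    (hz : ∀ i, ‖z i‖ ≤ ρ) (hρ0 : 0 ≤ ρ) (hρ : ρ < 1) :
    ∑' i, c i / (1 - z i) = ∑' k : ℕ, ∑' i, c i * z i ^ k :=
  calc ∑' i, c i / (1 - z i) = ∑' i, ∑' k : ℕ, c i * z i ^ k := by
        refine tsum_congr fun i => ?_
        rw [tsum_mul_left, tsum_geometric_of_norm_lt_one ((hz i).trans_lt hρ), div_eq_mul_inv]
    _ = ∑' k : ℕ, ∑' i, c i * z i ^ k :=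
        (Summable.tsum_comm (f := fun i k => c i * z i ^ k)
          (summable_mul_pow_of_norm_le hc hz hρ0 hρ)).symm

end GeometricExpansion

/-- The `(n, m)`-th term `aₙ bₘ x^(n+m+1) / (x - λ^(n+m) y) tⁿ sᵐ` of the generalized
Lambert–Rogers series with coefficient sequences `a` and `b`, where `l` stands for `λ`. The pair
`(n, m)` is a single index, so that absolute convergence of the double series is summability. -/
def lambertRogersTerm {𝕜 : Type*} [Field 𝕜] (a b : ℕ → 𝕜) (l x y t s : 𝕜) (p : ℕ × ℕ) : 𝕜 :=
  a p.1 * b p.2 * (x ^ (p.1 + p.2 + 1) / (x - l ^ (p.1 + p.2) * y)) * t ^ p.1 * s ^ p.2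

lemma lambertRogersTerm_eq_div_one_sub {𝕜 : Type*} [Field 𝕜] (a b : ℕ → 𝕜) (l : 𝕜) {x : 𝕜}
    (hx : x ≠ 0) (y t s : 𝕜) (p : ℕ × ℕ) :
    lambertRogersTerm a b l x y t s p =
      a p.1 * (t * x) ^ p.1 * (b p.2 * (s * x) ^ p.2) / (1 - l ^ (p.1 + p.2) * (y / x)) := by
  have hden : x - l ^ (p.1 + p.2) * y = x * (1 - l ^ (p.1 + p.2) * (y / x)) := by
    field_simp
  rw [lambertRogersTerm, hden, pow_succ', mul_div_mul_left _ _ hx]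
  ring

section LambertRogers

variable {𝕜 : Type*} [NormedField 𝕜] {a b : ℕ → 𝕜} {l x y t s : 𝕜}

lemma norm_div_lt_one_of_norm_lt_s11 (hyx : ‖y‖ < ‖x‖) : ‖y / x‖ < 1 := by
  rw [norm_div]
  exact (div_lt_one ((norm_nonneg y).trans_lt hyx)).2 hyx

lemma norm_pow_mul_le_of_norm_le_one (hl : ‖l‖ ≤ 1) (k : ℕ) (z : 𝕜) : ‖l ^ k * z‖ ≤ ‖z‖ := by
  rw [norm_mul, norm_pow]
  exact mul_le_of_le_one_left (norm_nonneg z) (pow_le_one₀ (norm_nonneg l) hl)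

lemma summable_norm_mul_pow_of_norm_le {u v : 𝕜} (h : Summable fun n => ‖a n * u ^ n‖)
    (hvu : ‖v‖ ≤ ‖u‖) : Summable fun n => ‖a n * v ^ n‖ := by
  refine h.of_nonneg_of_le (fun _ => norm_nonneg _) fun n => ?_
  simp only [norm_mul, norm_pow]
  gcongr

lemma tsum_prod_mul_pow_add_mul_pow [CompleteSpace 𝕜] {u v : 𝕜} (hl : ‖l‖ ≤ 1) (r : 𝕜)
    (k : ℕ) (ha : Summable fun n => ‖a n * u ^ n‖)
    (hb : Summable fun n => ‖b n * v ^ n‖) :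
    ∑' p : ℕ × ℕ, a p.1 * u ^ p.1 * (b p.2 * v ^ p.2) * (l ^ (p.1 + p.2) * r) ^ k =
      r ^ k * ((∑' n, a n * (l ^ k * u) ^ n) * ∑' m, b m * (l ^ k * v) ^ m) := by
  have hak := summable_norm_mul_pow_of_norm_le ha (norm_pow_mul_le_of_norm_le_one hl k u)
  have hbk := summable_norm_mul_pow_of_norm_le hb (norm_pow_mul_le_of_norm_le_one hl k v)
  rw [tsum_mul_tsum_of_summable_norm hak hbk, ← tsum_mul_left]
  exact tsum_congr fun p => by ring

theorem summable_norm_lambertRogersTerm (hl : ‖l‖ ≤ 1) (hyx : ‖y‖ < ‖x‖)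
    (ha : Summable fun n => ‖a n * (t * x) ^ n‖) (hb : Summable fun n => ‖b n * (s * x) ^ n‖) :
    Summable fun p => ‖lambertRogersTerm a b l x y t s p‖ := by
  have hx : x ≠ 0 := norm_pos_iff.1 ((norm_nonneg y).trans_lt hyx)
  have hcoeff := ha.mul_norm hb
  have hratio (p : ℕ × ℕ) : ‖l ^ (p.1 + p.2) * (y / x)‖ ≤ ‖y / x‖ :=
    norm_pow_mul_le_of_norm_le_one hl (p.1 + p.2) (y / x)
  simp only [lambertRogersTerm_eq_div_one_sub a b l hx]
  exact summable_norm_div_one_sub hcoeff hratio (norm_div_lt_one_of_norm_lt_s11 hyx)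

theorem tsum_lambertRogersTerm [CompleteSpace 𝕜] (hl : ‖l‖ ≤ 1) (hyx : ‖y‖ < ‖x‖)
    (ha : Summable fun n => ‖a n * (t * x) ^ n‖) (hb : Summable fun n => ‖b n * (s * x) ^ n‖) :
    ∑' p, lambertRogersTerm a b l x y t s p =
      ∑' k : ℕ, (y / x) ^ k *
        ((∑' n, a n * (l ^ k * (t * x)) ^ n) * ∑' m, b m * (l ^ k * (s * x)) ^ m) := by
  have hx : x ≠ 0 := norm_pos_iff.1 ((norm_nonneg y).trans_lt hyx)
  have hcoeff := ha.mul_norm hb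
  have hratio (p : ℕ × ℕ) : ‖l ^ (p.1 + p.2) * (y / x)‖ ≤ ‖y / x‖ :=
    norm_pow_mul_le_of_norm_le_one hl (p.1 + p.2) (y / x)
  simp only [lambertRogersTerm_eq_div_one_sub a b l hx]
  rw [tsum_div_one_sub_eq_tsum_tsum_mul_pow hcoeff hratio (norm_nonneg _)
    (norm_div_lt_one_of_norm_lt_s11 hyx)]
  exact tsum_congr fun k => tsum_prod_mul_pow_add_mul_pow hl (y / x) k ha hb

end LambertRogers

section Logarithm

open Complex

variable {z : ℂ}

lemma summable_norm_one_div_succ_mul_pow (hz : ‖z‖ < 1) :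
    Summable fun n : ℕ => ‖1 / (n + 1 : ℂ) * z ^ n‖ := by
  refine (summable_geometric_of_lt_one (norm_nonneg z) hz).of_nonneg_of_le
    (fun _ => norm_nonneg _) fun n => ?_
  have hcoeff : ‖1 / (n + 1 : ℂ)‖ ≤ 1 := by
    rw [← Nat.cast_add_one, norm_div, norm_one, norm_natCast]
    exact div_le_one_of_le₀ (by simp) (Nat.cast_nonneg _)
  rw [norm_mul, norm_pow]
  exact mul_le_of_le_one_left (by positivity) hcoeff

lemma tsum_one_div_succ_mul_pow (hz0 : z ≠ 0) (hz : ‖z‖ < 1) :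
    ∑' n : ℕ, 1 / (n + 1 : ℂ) * z ^ n = -log (1 - z) / z := by
  have hshift : HasSum (fun n : ℕ => z ^ (n + 1) / (n + 1 : ℂ)) (-log (1 - z)) := by
    simpa using (hasSum_nat_add_iff' 1).2 (hasSum_taylorSeries_neg_log hz)
  rw [← (hshift.div_const z).tsum_eq]
  refine tsum_congr fun n => ?_
  rw [pow_succ, div_right_comm, mul_div_cancel_right₀ _ hz0, one_div_mul_eq_div]

end Logarithm

theorem generalized_lambert_rogers_log_general {l x y t s : ℂ} (hl0 : l ≠ 0) (hl : ‖l‖ ≤ 1)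
    (hyx : ‖y‖ < ‖x‖) (ht : t ≠ 0) (htx : ‖t * x‖ < 1) (hs : s ≠ 0) (hsx : ‖s * x‖ < 1) :
    Summable (fun p : ℕ × ℕ =>
      ‖(1 / ((p.1 + 1 : ℂ) * (p.2 + 1 : ℂ))) *
        (x ^ (p.1 + p.2 + 1) / (x - l ^ (p.1 + p.2) * y)) * t ^ p.1 * s ^ p.2‖) ∧
    ∑' n : ℕ, ∑' m : ℕ, (1 / ((n + 1 : ℂ) * (m + 1 : ℂ))) *
        (x ^ (n + m + 1) / (x - l ^ (n + m) * y)) * t ^ n * s ^ m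
      = ∑' k : ℕ, (y / (l ^ 2 * x)) ^ k *
          (Complex.log (1 - l ^ k * t * x) * Complex.log (1 - l ^ k * s * x) /
            (t * s * x ^ 2)) := by
  have hx : x ≠ 0 := norm_pos_iff.1 ((norm_nonneg y).trans_lt hyx)
  have ha := summable_norm_one_div_succ_mul_pow htx
  have hb := summable_norm_one_div_succ_mul_pow hsx
  have hsum := summable_norm_lambertRogersTerm hl hyx ha hb
  have htsum := tsum_lambertRogersTerm hl hyx ha hb
  rw [hsum.of_norm.tsum_prod] at htsum
  simp only [lambertRogersTerm, one_div_mul_one_div] at hsum htsum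
  refine ⟨hsum, htsum.trans (tsum_congr fun k => ?_)⟩
  have hlk : l ^ k ≠ 0 := pow_ne_zero k hl0
  rw [tsum_one_div_succ_mul_pow (mul_ne_zero hlk (mul_ne_zero ht hx))
      ((norm_pow_mul_le_of_norm_le_one hl k _).trans_lt htx),
    tsum_one_div_succ_mul_pow (mul_ne_zero hlk (mul_ne_zero hs hx))
      ((norm_pow_mul_le_of_norm_le_one hl k _).trans_lt hsx),
    ← mul_assoc, ← mul_assoc, div_pow, div_pow, mul_pow, pow_right_comm]
  field_simp

/-- Rogers-type generalized Lambert series for `aₙ = 1/(n+1)`, `bₘ = 1/(m+1)`,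
with generating functions `−log(1−u)/u` (principal complex logarithm). -/
theorem generalized_lambert_rogers_log (l x y t s : ℂ)
    (hl0 : 0 < ‖l‖) (hl : ‖l‖ < 1) (hyx : ‖y‖ < ‖x‖)
    (htx0 : 0 < ‖t * x‖) (htx : ‖t * x‖ < 1)
    (hsx0 : 0 < ‖s * x‖) (hsx : ‖s * x‖ < 1) :
    Summable (fun p : ℕ × ℕ =>
      ‖(1 / ((p.1 + 1 : ℂ) * (p.2 + 1 : ℂ))) *
        (x ^ (p.1 + p.2 + 1) / (x - l ^ (p.1 + p.2) * y)) * t ^ p.1 * s ^ p.2‖) ∧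
    ∑' n : ℕ, ∑' m : ℕ, (1 / ((n + 1 : ℂ) * (m + 1 : ℂ))) *
        (x ^ (n + m + 1) / (x - l ^ (n + m) * y)) * t ^ n * s ^ m
      = ∑' k : ℕ, (y / (l ^ 2 * x)) ^ k *
          (Complex.log (1 - l ^ k * t * x) * Complex.log (1 - l ^ k * s * x) /
            (t * s * x ^ 2)) :=
  generalized_lambert_rogers_log_general (norm_pos_iff.1 hl0) hl.le hyx
    (left_ne_zero_of_mul (norm_pos_iff.1 htx0)) htx (left_ne_zero_of_mul (norm_pos_iff.1 hsx0)) hsx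
end

section
/- Let λ, x, y, z be complex numbers with |λ| < 1 and |y| < |x|, and let f(u) = ∑_{m=0}^∞ ((−1)^m/(2m)!) u^m (so that f(u²) = cos u). Then ∑_{n=0}^∞ ((−1)^n/(2n)!) · x^{n+1}/(x − λ^n y) · z^n = ∑_{k=0}^∞ (y/x)^k f(λ^k x z) = ∑_{k=0}^∞ (y/x)^k ∑_{m=0}^∞ ((−1)^m/(2m)!) (λ^k x z)^m. -/
/-!
Expanding `x / (x - lⁿ y) = ∑ₖ (lⁿ y / x)ᵏ` as a geometric series turns the Lambert series into a
double series over `n` and `k`. Since `‖lⁿ‖ ≤ 1`, it is dominated by the product of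
`∑ₙ ‖aₙ (x z)ⁿ‖` and `∑ₖ ‖y / x‖ᵏ`, so it may be summed over `n` first.
-/

section LambertSeries

variable {𝕜 : Type*} [NormedField 𝕜]

theorem norm_mul_pow_mul_le {q : 𝕜} (hq : ‖q‖ ≤ 1) (c r : 𝕜) (k : ℕ) :
    ‖c * (q * r) ^ k‖ ≤ ‖c‖ * ‖r‖ ^ k := by
  rw [norm_mul, norm_pow, norm_mul]
  gcongr
  exact mul_le_of_le_one_left (norm_nonneg r) hq

theorem div_one_sub_mul_eq_tsum {q r : 𝕜} (hq : ‖q‖ ≤ 1) (hr : ‖r‖ < 1) (c : 𝕜) :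
    c / (1 - q * r) = ∑' k : ℕ, c * (q * r) ^ k := by
  have hqr : ‖q * r‖ < 1 :=
    (norm_mul q r).trans_lt ((mul_le_of_le_one_left (norm_nonneg r) hq).trans_lt hr)
  rw [tsum_mul_left, tsum_geometric_of_norm_lt_one hqr, div_eq_mul_inv]

variable [CompleteSpace 𝕜]

theorem summable_mul_pow_mul {ι : Type*} {c q : ι → 𝕜} {r : 𝕜} (hc : Summable fun i => ‖c i‖)
    (hq : ∀ i, ‖q i‖ ≤ 1) (hr : ‖r‖ < 1) :
    Summable fun p : ι × ℕ => c p.1 * (q p.1 * r) ^ p.2 := by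
  have hgeom : Summable fun k : ℕ => ‖r‖ ^ k :=
    summable_geometric_of_lt_one (norm_nonneg r) hr
  have hdom : Summable fun p : ι × ℕ => ‖c p.1‖ * ‖r‖ ^ p.2 :=
    hc.mul_of_nonneg hgeom (fun _ => norm_nonneg _) (fun _ => by positivity)
  exact hdom.of_norm_bounded fun p => norm_mul_pow_mul_le (hq p.1) (c p.1) r p.2

theorem tsum_div_one_sub_mul {ι : Type*} {c q : ι → 𝕜} {r : 𝕜} (hc : Summable fun i => ‖c i‖)
    (hq : ∀ i, ‖q i‖ ≤ 1) (hr : ‖r‖ < 1) :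
    ∑' i, c i / (1 - q i * r) = ∑' k : ℕ, r ^ k * ∑' i, c i * q i ^ k :=
  calc ∑' i, c i / (1 - q i * r)
      = ∑' i, ∑' k : ℕ, c i * (q i * r) ^ k :=
        tsum_congr fun i => div_one_sub_mul_eq_tsum (hq i) hr (c i)
    _ = ∑' k : ℕ, ∑' i, c i * (q i * r) ^ k :=
        (Summable.tsum_comm (f := fun i k => c i * (q i * r) ^ k)
          (summable_mul_pow_mul hc hq hr)).symm
    _ = ∑' k : ℕ, r ^ k * ∑' i, c i * q i ^ k := by
        refine tsum_congr fun k => ?_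
        rw [← tsum_mul_left]
        exact tsum_congr fun i => by ring

theorem generalized_lambert_cos_general {a : ℕ → 𝕜} {l x y z : 𝕜} (hl : ‖l‖ ≤ 1)
    (hyx : ‖y‖ < ‖x‖) (ha : Summable fun n => ‖a n * (x * z) ^ n‖) :
    ∑' n : ℕ, a n * (x ^ (n + 1) / (x - l ^ n * y)) * z ^ n
      = ∑' k : ℕ, (y / x) ^ k * ∑' m : ℕ, a m * (l ^ k * x * z) ^ m := by
  have hx_pos : 0 < ‖x‖ := (norm_nonneg y).trans_lt hyx
  have hx : x ≠ 0 := norm_pos_iff.mp hx_pos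
  have hratio : ‖y / x‖ < 1 := by rwa [norm_div, div_lt_one hx_pos]
  have hpow (n : ℕ) : ‖l ^ n‖ ≤ 1 := by
    rw [norm_pow]
    exact pow_le_one₀ (norm_nonneg l) hl
  have hden (n : ℕ) : x - l ^ n * y = x * (1 - l ^ n * (y / x)) := by field_simp
  calc ∑' n : ℕ, a n * (x ^ (n + 1) / (x - l ^ n * y)) * z ^ n
      = ∑' n : ℕ, a n * (x * z) ^ n / (1 - l ^ n * (y / x)) := by
        refine tsum_congr fun n => ?_
        rw [hden, pow_succ', mul_div_mul_left _ _ hx]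
        ring
    _ = ∑' k : ℕ, (y / x) ^ k * ∑' m : ℕ, a m * (x * z) ^ m * (l ^ m) ^ k :=
        tsum_div_one_sub_mul ha hpow hratio
    _ = ∑' k : ℕ, (y / x) ^ k * ∑' m : ℕ, a m * (l ^ k * x * z) ^ m := by
        congr! 5 with k m
        ring

end LambertSeries

-- With `s = √‖w‖`, the norms are the terms `s²ⁿ / (2n)!` of the series of `cosh s`.
theorem summable_norm_neg_one_pow_div_factorial_two_mul {𝕜 : Type*} [NormedDivisionRing 𝕜]
    [NormSMulClass ℤ 𝕜] (w : 𝕜) :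
    Summable fun n : ℕ => ‖(-1 : 𝕜) ^ n / (Nat.factorial (2 * n) : 𝕜) * w ^ n‖ := by
  refine (Real.hasSum_cosh √‖w‖).summable.congr fun n => ?_
  rw [pow_mul, Real.sq_sqrt (norm_nonneg w), norm_mul, norm_div, norm_pow, norm_pow, norm_neg,
    norm_one, one_pow, norm_natCast, one_div_mul_eq_div]

/-- Generalized Lambert series for `aₙ = (−1)ⁿ/(2n)!`, with generating function
`f(u) = ∑ₘ ((−1)ᵐ/(2m)!) uᵐ` (so that `f(u²) = cos u`). -/
theorem generalized_lambert_cos (l x y z : ℂ)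
    (hl : ‖l‖ < 1) (hyx : ‖y‖ < ‖x‖) :
    ∑' n : ℕ, ((-1 : ℂ) ^ n / (Nat.factorial (2 * n) : ℂ)) *
        (x ^ (n + 1) / (x - l ^ n * y)) * z ^ n
      = ∑' k : ℕ, (y / x) ^ k *
          ∑' m : ℕ, ((-1 : ℂ) ^ m / (Nat.factorial (2 * m) : ℂ)) *
            (l ^ k * x * z) ^ m :=
  generalized_lambert_cos_general hl.le hyx
    (summable_norm_neg_one_pow_div_factorial_two_mul (x * z))
end
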